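/- For every even natural number n with n ≥ 4, the identity n!·2^{n/2} / (n·(n−1)(n−2)·∏_{j=1}^{(n−4)/2}(n − 2(1+j))) = 2^{n−1}·Γ((n−1)/2)/√π holds in ℝ, where Γ is the real Gamma function; equivalently, M₂(n) = (−1)^{(n+2)/2}·2^{n−1}·π^{−1/2}·Γ((n−1)/2). -/

import Mathlib

/-!
The factors `n, n - 2, n - 4, …, 2` of the denominator multiply to the double factorial `n‼`, so
`n! = n‼ * (n - 1)‼` and `(n - 1)‼ = (n - 1) * (n - 3)‼` reduce the quotient to
`2 ^ (n / 2) * (n - 3)‼`. The double factorial `(n - 3)‼` is, up to `√π` and a power of two, the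
value of `Γ` at the half-integer `(n - 1) / 2`.
-/

open Finset
open scoped Nat

section CommRing

variable {R : Type*} [CommRing R]

theorem prod_range_two_mul_sub_eq_doubleFactorial (m : ℕ) :
    ∏ j ∈ range m, (((2 * m : ℕ) : R) - 2 * (j : R)) = ((2 * m)‼ : ℕ) := by
  induction m with
  | zero => simp
  | succ m ih =>
    have shift : ∏ j ∈ range m, (((2 * (m + 1) : ℕ) : R) - 2 * ((j + 1 : ℕ) : R)) =
        ∏ j ∈ range m, (((2 * m : ℕ) : R) - 2 * (j : R)) :=
      prod_congr rfl fun j _ => by push_cast; ring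
    rw [prod_range_succ', shift, ih, mul_add_one, Nat.doubleFactorial_add_two]
    push_cast
    ring

theorem mul_sub_two_mul_prod_Icc_eq_prod_range (x : R) (k : ℕ) :
    x * (x - 2) * ∏ j ∈ Icc 1 k, (x - 2 * (1 + (j : R))) =
      ∏ j ∈ range (k + 2), (x - 2 * (j : R)) := by
  have shift : ∏ j ∈ Icc 1 k, (x - 2 * (1 + (j : R))) =
      ∏ j ∈ range k, (x - 2 * ((j + 1 + 1 : ℕ) : R)) := by
    rw [← Ico_add_one_right_eq_Icc, prod_Ico_eq_prod_range, Nat.add_sub_cancel]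
    exact prod_congr rfl fun j _ => by push_cast; ring
  rw [prod_range_succ', prod_range_succ', shift]
  push_cast
  ring

end CommRing

theorem factorial_add_three_div_eq_doubleFactorial {K : Type*} [Field K] [CharZero K]
    (m : ℕ) : ((m + 3)! : K) / ((m + 2 : ℕ) * (m + 3)‼) = (m‼ : ℕ) := by
  have doubleFactorial_ne_zero : ((m + 3)‼ : K) ≠ 0 :=
    mod_cast (Nat.doubleFactorial_pos (m + 3)).ne'
  have add_two_ne_zero : ((m + 2 : ℕ) : K) ≠ 0 := Nat.cast_ne_zero.mpr (by lia)
  rw [Nat.factorial_eq_mul_doubleFactorial (m + 2), Nat.doubleFactorial_add_two m,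
    Nat.cast_mul, Nat.cast_mul]
  field_simp

theorem two_pow_mul_Gamma_div_sqrt_pi_eq_doubleFactorial (k : ℕ) :
    2 ^ (k + 1) * Real.Gamma (k + 1 + 1 / 2) / √Real.pi = ((2 * k + 1)‼ : ℕ) := by
  rw [Real.Gamma_nat_add_one_add_half]
  field_simp

theorem stmt14 (n : ℕ) (hev : Even n) (hn : 4 ≤ n) :
    (Nat.factorial n : ℝ) * 2 ^ (n / 2) /
        ((n : ℝ) * ((n : ℝ) - 1) * ((n : ℝ) - 2) *
          ∏ j ∈ Finset.Icc 1 ((n - 4) / 2), ((n : ℝ) - 2 * (1 + (j : ℝ))))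
      = 2 ^ (n - 1) * Real.Gamma (((n : ℝ) - 1) / 2) / Real.sqrt Real.pi := by
  obtain ⟨k, rfl⟩ : ∃ k, n = 2 * (k + 2) := by
    obtain ⟨m, rfl⟩ := hev
    exact ⟨m - 2, by lia⟩
  rw [show (2 * (k + 2) - 4) / 2 = k by lia, show 2 * (k + 2) / 2 = k + 2 by lia,
    show 2 * (k + 2) - 1 = (k + 2) + (k + 1) by lia]
  set x : ℝ := ((2 * (k + 2) : ℕ) : ℝ) with hx
  have sub_one_eq : x - 1 = (2 * k + 1 + 2 : ℕ) := by rw [hx]; push_cast; ring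
  have half_sub_one_eq : (x - 1) / 2 = k + 1 + 1 / 2 := by rw [hx]; push_cast; ring
  have prod_eq : x * (x - 2) * ∏ j ∈ Icc 1 k, (x - 2 * (1 + (j : ℝ))) = (2 * (k + 2))‼ := by
    rw [mul_sub_two_mul_prod_Icc_eq_prod_range, prod_range_two_mul_sub_eq_doubleFactorial]
  calc
    _ = 2 ^ (k + 2) * (((2 * k + 1 + 3)! : ℝ) / ((2 * k + 1 + 2 : ℕ) * (2 * k + 1 + 3)‼)) := by
      rw [mul_right_comm x, mul_right_comm (x * (x - 2)), prod_eq, sub_one_eq]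
      ring_nf
    _ = 2 ^ (k + 2) * (2 ^ (k + 1) * Real.Gamma (k + 1 + 1 / 2) / √Real.pi) := by
      rw [factorial_add_three_div_eq_doubleFactorial,
        two_pow_mul_Gamma_div_sqrt_pi_eq_doubleFactorial]
    _ = _ := by
      rw [half_sub_one_eq, pow_add 2 (k + 2)]
      ring
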